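/- There exists a sequence of maps ζ_n : ℤ² → P(SL(2,ℤ)), n ∈ ℕ, where P(SL(2,ℤ)) denotes the set of probability densities on SL(2,ℤ), such that: (i) for every n ∈ ℕ and every a ∈ ℤ², ‖ζ_n(y + a) − ζ_n(y)‖₁ → 0 along the cofinite filter on ℤ²; and (ii) for every g ∈ SL(2,ℤ), the limit superior along the cofinite filter of y ↦ ‖ζ_n(g·y) − g·ζ_n(y)‖₁ tends to 0 as n → ∞. (This is the function-level formulation of the Proposition: the action of SL(2,ℤ) on the Higson corona of ℤ² is topologically amenable.) -/

import Mathlib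

/-!
Let `SL(2, ℤ)` act by left multiplication on the invertible real-linear maps `M` of the plane
`ℂ = ℝ²`. Normalising `h ↦ ‖h⁻¹ M‖⁻ᵖ`, with `p` so large that it is summable, gives an exactly
equivariant map from such `M` to probability densities, and it moves little when `M` is multiplied
on the right by a map close to `1`.

To a nonzero `z : ℂ` attach the frame `F(z, t) : 1 ↦ z, i ↦ e⁻ᵗ i z`. Translating `z` by `a`
multiplies `F(z, t)` on the right by `D⁻¹ C D`, where `D` depends only on `t` and `C` is
multiplication by `1 + a / z`, and this tends to `1` as `z → ∞`. If `u` is a linear map of positive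
determinant and `q = u(iz) / u(z)`, then
`u F(z, t) = F(u(z), t - log (Im q)) N`, where `N` is the shear by `e⁻ᵗ Re q`. As `q` stays in a
compact subset of the upper half-plane, `N` is negligible for large `t`; what remains is a bounded
shift of the parameter `t`, which disappears on averaging over `t ∈ [r, 2r]` with `r` large.
-/

open Filter MeasureTheory NormedSpace Set Topology
open scoped lp

lemma tendsto_limsup_nhds_zero {α ι : Type*} {l : Filter α} [l.NeBot] {l' : Filter ι}
    {f : ι → α → ℝ} (hf : ∀ i x, 0 ≤ f i x) (h : ∀ η > 0, ∀ᶠ i in l', ∀ᶠ x in l, f i x ≤ η) :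
    Tendsto (fun i => limsup (f i) l) l' (𝓝 0) := by
  rw [Metric.tendsto_nhds]
  intro ε hε
  filter_upwards [h (ε / 2) (half_pos hε)] with i hi
  have hnonneg : ∀ᶠ x in l, 0 ≤ f i x := .of_forall (hf i)
  have hle := limsup_le_of_le (isCoboundedUnder_le_of_eventually_le l hnonneg) hi
  have hge := le_limsup_of_frequently_le hnonneg.frequently (isBoundedUnder_of_eventually_le hi)
  rw [Real.dist_eq, sub_zero, abs_of_nonneg hge]
  linarith

section Normed

variable {E : Type*} [NormedAddCommGroup E] [NormedSpace ℝ E]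

lemma norm_normalize_sub_normalize_le {x : E} (hx : x ≠ 0) (y : E) :
    ‖normalize x - normalize y‖ ≤ 2 * ‖x - y‖ / ‖x‖ := by
  have hy : ‖normalize y‖ ≤ 1 := by
    rcases eq_or_ne y 0 with rfl | hy
    · simp
    · exact (norm_normalize_eq_one_iff.mpr hy).le
  have hsmul : ‖x‖ • (normalize x - normalize y) = (x - y) + (‖y‖ - ‖x‖) • normalize y := by
    rw [smul_sub, sub_smul, norm_smul_normalize, norm_smul_normalize]
    abel
  rw [le_div_iff₀' (norm_pos_iff.mpr hx)]
  calc ‖x‖ * ‖normalize x - normalize y‖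
      = ‖(x - y) + (‖y‖ - ‖x‖) • normalize y‖ := by rw [← hsmul, norm_smul, norm_norm]
    _ ≤ ‖x - y‖ + |‖y‖ - ‖x‖| * ‖normalize y‖ := by
        simpa only [norm_smul, Real.norm_eq_abs] using
          norm_add_le (x - y) ((‖y‖ - ‖x‖) • normalize y)
    _ ≤ ‖x - y‖ + ‖x - y‖ * 1 := by
        gcongr
        exact (abs_norm_sub_norm_le y x).trans_eq (norm_sub_rev y x)
    _ = 2 * ‖x - y‖ := by ring

variable {f g : ℝ → E} {a b : ℝ}

lemma intervalAverage_mem_of_convex [CompleteSpace E] {s : Set E} (hs : Convex ℝ s)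
    (hs' : IsClosed s) (hab : a < b) (hf : Continuous f) (hfs : ∀ t ∈ Icc a b, f t ∈ s) :
    ⨍ t in a..b, f t ∈ s := by
  rw [uIoc_of_le hab.le]
  refine hs.set_average_mem hs' ?_ measure_Ioc_lt_top.ne ?_
    (hf.intervalIntegrable a b).1
  · simpa using hab
  · exact ae_restrict_of_forall_mem measurableSet_Ioc fun t ht => hfs t (Ioc_subset_Icc_self ht)

lemma norm_intervalAverage_sub_le [CompleteSpace E] {ε : ℝ} (hab : a < b) (hf : Continuous f)
    (hg : Continuous g) (h : ∀ t ∈ Icc a b, ‖f t - g t‖ ≤ ε) :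
    ‖(⨍ t in a..b, f t) - ⨍ t in a..b, g t‖ ≤ ε := by
  have hsub : (⨍ t in a..b, f t) - ⨍ t in a..b, g t = ⨍ t in a..b, (f t - g t) := by
    simp only [interval_average_eq, ← smul_sub]
    rw [intervalIntegral.integral_sub (hf.intervalIntegrable a b) (hg.intervalIntegrable a b)]
  rw [hsub, ← mem_closedBall_zero_iff]
  exact intervalAverage_mem_of_convex (convex_closedBall 0 ε) Metric.isClosed_closedBall hab
    (hf.sub hg) fun t ht => mem_closedBall_zero_iff.mpr (h t ht)

lemma norm_intervalAverage_comp_add_right_sub_le {K : ℝ} (hf : Continuous f)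
    (hK : ∀ t, ‖f t‖ ≤ K) (a b c : ℝ) :
    ‖(⨍ t in a..b, f (t + c)) - ⨍ t in a..b, f t‖ ≤ 2 * K * |c| / |b - a| := by
  have hint : ∀ u v, IntervalIntegrable f volume u v := hf.intervalIntegrable
  have hend : ∀ u, ‖∫ t in u..u + c, f t‖ ≤ K * |c| := fun u => by
    simpa using intervalIntegral.norm_integral_le_of_norm_le_const (a := u) (b := u + c)
      fun t _ => hK t
  have hcomm : (∫ t in a..b, f (t + c)) - ∫ t in a..b, f t =
      (∫ t in b..b + c, f t) - ∫ t in a..a + c, f t := by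
    rw [intervalIntegral.integral_comp_add_right,
      ← intervalIntegral.integral_interval_sub_interval_comm' (hint _ _) (hint _ _) (hint _ _)]
  rw [interval_average_eq, interval_average_eq, ← smul_sub, hcomm, norm_smul, norm_inv,
    Real.norm_eq_abs, ← div_eq_inv_mul]
  gcongr
  linarith [norm_sub_le (∫ t in b..b + c, f t) (∫ t in a..a + c, f t), hend a, hend b]

lemma units_inv_apply_apply (u : (E →L[ℝ] E)ˣ) (x : E) : (u⁻¹).val (u.val x) = x := by
  rw [← mul_apply_eq_comp, Units.inv_mul, one_apply_eq_self]

lemma exists_abs_log_norm_apply_sub_log_norm_le (u : (E →L[ℝ] E)ˣ) :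
    ∃ B, ∀ x ≠ 0, |Real.log ‖u.val x‖ - Real.log ‖x‖| ≤ B := by
  have hupper : ∀ (v : E →L[ℝ] E) (x : E), v x ≠ 0 →
      Real.log ‖v x‖ - Real.log ‖x‖ ≤ Real.log ‖v‖ := fun v x hvx => by
    have hv : ‖v‖ ≠ 0 := fun h => hvx (by simp [norm_eq_zero.mp h])
    have hx : ‖x‖ ≠ 0 := fun h => hvx (by simp [norm_eq_zero.mp h])
    rw [sub_le_iff_le_add, ← Real.log_mul hv hx]
    exact Real.log_le_log (norm_pos_iff.mpr hvx) (v.le_opNorm x)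
  refine ⟨max (Real.log ‖u.val‖) (Real.log ‖(u⁻¹).val‖), fun x hx => ?_⟩
  have hux : u.val x ≠ 0 := fun h => hx (by rw [← units_inv_apply_apply u x, h, map_zero])
  have hlower := hupper (u⁻¹).val (u.val x) (by rwa [units_inv_apply_apply])
  rw [units_inv_apply_apply] at hlower
  have := hupper u.val x hux
  grind

end Normed

section Density

variable {G : Type*}

/-- The set of probability densities on `G`, as a subset of `ℓ¹(G, ℝ)`. -/
def probDensities (G : Type*) : Set ℓ¹(G, ℝ) := {f | (∀ h, 0 ≤ f h) ∧ ∑' h, f h = 1}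

lemma norm_eq_tsum_abs (f : ℓ¹(G, ℝ)) : ‖f‖ = ∑' h, |f h| := by
  simpa using lp.norm_eq_tsum_rpow (by simp) f

lemma summable_coeFn (f : ℓ¹(G, ℝ)) : Summable f :=
  .of_norm <| by simpa using (lp.memℓp f).summable (by simp)

lemma norm_eq_one_of_mem_probDensities {f : ℓ¹(G, ℝ)} (hf : f ∈ probDensities G) : ‖f‖ = 1 := by
  simpa only [norm_eq_tsum_abs, abs_of_nonneg (hf.1 _)] using hf.2

lemma normalize_mem_probDensities {f : ℓ¹(G, ℝ)} (hf : f ≠ 0) (hf' : ∀ h, 0 ≤ f h) :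
    normalize f ∈ probDensities G := by
  have hnorm : ‖f‖ = ∑' h, f h := by simp only [norm_eq_tsum_abs, abs_of_nonneg (hf' _)]
  refine ⟨fun h => mul_nonneg (by positivity) (hf' h), ?_⟩
  simp only [NormedSpace.normalize, lp.coeFn_smul, Pi.smul_apply, smul_eq_mul, tsum_mul_left,
    ← hnorm]
  exact inv_mul_cancel₀ (norm_ne_zero_iff.mpr hf)

lemma probDensities_eq_iInter_inter : probDensities G =
    (⋂ h, lp.evalCLM ℝ (fun _ : G => ℝ) 1 h ⁻¹' Ici 0) ∩ lp.tsumCLM ℝ G ℝ ⁻¹' {1} := by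
  ext f
  simp [probDensities, lp.evalCLM]

lemma convex_probDensities : Convex ℝ (probDensities G) := by
  rw [probDensities_eq_iInter_inter]
  exact (convex_iInter fun h => (convex_Ici 0).linear_preimage _).inter
    ((convex_singleton 1).linear_preimage (lp.tsumCLM ℝ G ℝ).toLinearMap)

lemma isClosed_probDensities : IsClosed (probDensities G) := by
  rw [probDensities_eq_iInter_inter]
  exact (isClosed_iInter fun h => isClosed_Ici.preimage (map_continuous _)).inter
    (isClosed_singleton.preimage (map_continuous _))

lemma intervalAverage_apply {f : ℝ → ℓ¹(G, ℝ)} (hf : Continuous f) (a b : ℝ) (h : G) :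
    (⨍ t in a..b, f t) h = ⨍ t in a..b, f t h := by
  have := (lp.evalCLM ℝ (fun _ : G => ℝ) 1 h).intervalIntegral_comp_comm
    (hf.intervalIntegrable (μ := volume) a b)
  rw [interval_average_eq, interval_average_eq, lp.coeFn_smul, Pi.smul_apply]
  exact congrArg _ this.symm

end Density

section Orbit

variable {A : Type*} [NormedRing A]

lemma inv_norm_mul_unit_pow_le (x : A) (U : Aˣ) (p : ℕ) :
    ‖x * U‖⁻¹ ^ p ≤ ‖(↑U⁻¹ : A)‖ ^ p * ‖x‖⁻¹ ^ p := by
  rw [← mul_pow]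
  gcongr
  rcases eq_or_ne x 0 with rfl | hx
  · simp
  have hle : ‖x‖ ≤ ‖x * U‖ * ‖(↑U⁻¹ : A)‖ := by
    simpa using norm_mul_le (x * U) (↑U⁻¹ : A)
  have hxU : 0 < ‖x * U‖ := norm_pos_iff.mpr (by simpa using hx)
  rwa [← div_eq_mul_inv, le_div_iff₀ (norm_pos_iff.mpr hx), inv_mul_le_iff₀ hxU]

variable {G : Type*} [Group G] {ρ : G →* Aˣ} {p : ℕ}

/-- The weight `h ↦ ‖ρ(h)⁻¹ M‖⁻ᵖ` on `G`. -/
noncomputable def orbitWeight (hρ : Summable fun h => ‖(ρ h : A)‖⁻¹ ^ p) (M : Aˣ) : ℓ¹(G, ℝ) :=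
  ⟨fun h => ‖(((ρ h)⁻¹ * M : Aˣ) : A)‖⁻¹ ^ p, memℓp_gen <| by
    have hinv : Summable fun h => ‖((ρ h)⁻¹ : Aˣ).val‖⁻¹ ^ p := by
      simpa [Function.comp_def] using (Equiv.inv G).summable_iff.mpr hρ
    simpa using Summable.of_nonneg_of_le (fun h => by positivity)
      (fun h => inv_norm_mul_unit_pow_le _ M p) (hinv.mul_left _)⟩

/-- The probability density on `G` proportional to `orbitWeight`; it depends equivariantly on the
point `M` of the group `Aˣ`, on which `G` acts by left multiplication through `ρ`. -/
noncomputable def orbitDensity (hρ : Summable fun h => ‖(ρ h : A)‖⁻¹ ^ p) (M : Aˣ) : ℓ¹(G, ℝ) :=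
  normalize (orbitWeight hρ M)

variable (hρ : Summable fun h => ‖(ρ h : A)‖⁻¹ ^ p)

lemma orbitWeight_apply (M : Aˣ) (h : G) :
    orbitWeight hρ M h = ‖(((ρ h)⁻¹ * M : Aˣ) : A)‖⁻¹ ^ p := rfl

lemma orbitDensity_mul_left (g : G) (M : Aˣ) (h : G) :
    orbitDensity hρ (ρ g * M) h = orbitDensity hρ M (g⁻¹ * h) := by
  have happly : ∀ h, orbitWeight hρ (ρ g * M) h = orbitWeight hρ M (g⁻¹ * h) := fun h => by
    simp only [orbitWeight_apply, map_mul, map_inv, mul_inv_rev, inv_inv, mul_assoc]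
  have hnorm : ‖orbitWeight hρ (ρ g * M)‖ = ‖orbitWeight hρ M‖ := by
    simp only [norm_eq_tsum_abs, happly]
    exact (Equiv.mulLeft g⁻¹).tsum_eq fun h => |orbitWeight hρ M h|
  simp only [orbitDensity, NormedSpace.normalize, lp.coeFn_smul, Pi.smul_apply, happly, hnorm]

variable [NormOneClass A]

lemma orbitWeight_ne_zero (M : Aˣ) : orbitWeight hρ M ≠ 0 := by
  have := NormOneClass.nontrivial (G := A)
  intro hzero
  have hone : ‖(((ρ 1)⁻¹ * M : Aˣ) : A)‖⁻¹ ^ p = 0 := by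
    rw [← orbitWeight_apply hρ, hzero, lp.coeFn_zero, Pi.zero_apply]
  exact (pow_pos (inv_pos.mpr (Units.norm_pos _)) p).ne' hone

lemma orbitDensity_mem_probDensities (M : Aˣ) : orbitDensity hρ M ∈ probDensities G :=
  normalize_mem_probDensities (orbitWeight_ne_zero hρ M) fun h => by
    rw [orbitWeight_apply]; positivity

lemma eventually_abs_inv_norm_mul_pow_sub_le (p : ℕ) {η : ℝ} (hη : 0 < η) :
    ∀ᶠ U : Aˣ in 𝓝 1, ∀ x : A, |‖x * U‖⁻¹ ^ p - ‖x‖⁻¹ ^ p| ≤ η * ‖x‖⁻¹ ^ p := by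
  have hlow : Tendsto (fun U : Aˣ => ‖(U : A)‖⁻¹ ^ p) (𝓝 1) (𝓝 1) := by
    have : ContinuousAt (fun U : Aˣ => ‖(U : A)‖⁻¹ ^ p) 1 :=
      (Units.continuous_val.norm.continuousAt.inv₀ (by simp)).pow p
    simpa [ContinuousAt] using this
  have hupp : Tendsto (fun U : Aˣ => ‖(↑U⁻¹ : A)‖ ^ p) (𝓝 1) (𝓝 1) := by
    have : Continuous fun U : Aˣ => ‖(↑U⁻¹ : A)‖ ^ p := by fun_prop
    simpa using this.tendsto 1
  filter_upwards [hlow.eventually_const_le (sub_lt_self 1 hη),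
    hupp.eventually_le_const (lt_add_of_pos_right 1 hη)] with U hU hU' x
  have hw : 0 ≤ ‖x‖⁻¹ ^ p := by positivity
  have h₁ : ‖x * U‖⁻¹ ^ p ≤ (1 + η) * ‖x‖⁻¹ ^ p :=
    (inv_norm_mul_unit_pow_le x U p).trans (by gcongr)
  have h₂ : (1 - η) * ‖x‖⁻¹ ^ p ≤ ‖x * U‖⁻¹ ^ p := by
    refine (mul_le_mul_of_nonneg_right hU hw).trans ?_
    have := NormOneClass.nontrivial (G := A)
    have := U.norm_pos
    rw [inv_pow ‖(U : A)‖, inv_mul_le_iff₀ (by positivity)]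
    simpa using inv_norm_mul_unit_pow_le (x * U) U⁻¹ p
  rw [abs_le]
  constructor <;> linarith

lemma eventually_norm_orbitDensity_mul_right_sub_le {η : ℝ} (hη : 0 < η) :
    ∀ᶠ U : Aˣ in 𝓝 1, ∀ M, ‖orbitDensity hρ (M * U) - orbitDensity hρ M‖ ≤ η := by
  filter_upwards [eventually_abs_inv_norm_mul_pow_sub_le p (half_pos hη)] with U hU M
  have hweight : ‖orbitWeight hρ M - orbitWeight hρ (M * U)‖ ≤ η / 2 * ‖orbitWeight hρ M‖ := by
    rw [← abs_of_pos (half_pos hη), ← Real.norm_eq_abs, ← norm_smul]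
    refine lp.norm_mono one_ne_zero fun h => ?_
    simp only [lp.coeFn_sub, lp.coeFn_smul, Pi.sub_apply, Pi.smul_apply, orbitWeight_apply,
      norm_smul, Real.norm_eq_abs, abs_of_pos (half_pos hη), ← mul_assoc, Units.val_mul (_ * M) U]
    rw [abs_sub_comm, abs_of_nonneg (a := _ ^ p) (by positivity)]
    exact hU _
  have hpos := norm_pos_iff.mpr (orbitWeight_ne_zero hρ M)
  rw [norm_sub_rev]
  refine (norm_normalize_sub_normalize_le (orbitWeight_ne_zero hρ M) _).trans ?_
  rw [div_le_iff₀ hpos]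
  linarith

lemma continuous_orbitDensity : Continuous (orbitDensity hρ) := by
  rw [continuous_iff_continuousAt]
  intro M
  rw [ContinuousAt, Metric.tendsto_nhds]
  intro ε hε
  have hlim : Tendsto (fun N => M⁻¹ * N) (𝓝 M) (𝓝 1) := by
    simpa using (continuous_const_mul M⁻¹).tendsto M
  filter_upwards [hlim.eventually (eventually_norm_orbitDensity_mul_right_sub_le hρ (half_pos hε))]
    with N hN
  have := hN M
  rw [mul_inv_cancel_left] at this
  rw [dist_eq_norm]
  linarith

end Orbit

section Frame

/-- The real-linear endomorphism of `ℂ` fixing `1` and sending `i` to `q`. -/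
noncomputable def upperTriangular (q : ℂ) : ℂ →L[ℝ] ℂ :=
  Complex.reCLM.smulRight 1 + Complex.imCLM.smulRight q

lemma upperTriangular_apply (q z : ℂ) : upperTriangular q z = z.re + z.im * q := by
  simp [upperTriangular]

lemma upperTriangular_I : upperTriangular Complex.I = 1 := by
  ext z
  simp [upperTriangular_apply, Complex.re_add_im]

lemma upperTriangular_mul (q r : ℂ) :
    upperTriangular q * upperTriangular r = upperTriangular (r.re + r.im * q) := by
  ext z
  simp only [mul_apply_eq_comp, upperTriangular_apply, Complex.add_re, Complex.add_im,
    Complex.ofReal_re, Complex.ofReal_im, Complex.re_ofReal_mul, Complex.im_ofReal_mul,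
    Complex.ofReal_add, Complex.ofReal_mul, zero_add]
  ring

lemma continuous_upperTriangular : Continuous upperTriangular :=
  continuous_const.add (ContinuousLinearMap.smulRightL ℝ ℂ ℂ Complex.imCLM).continuous

/-- The contraction `x + i y ↦ x + i e⁻ᵗ y` of the imaginary axis. -/
noncomputable def contraction (t : ℝ) : (ℂ →L[ℝ] ℂ)ˣ where
  val := upperTriangular (Real.exp (-t) * Complex.I)
  inv := upperTriangular (Real.exp t * Complex.I)
  val_inv := by
    rw [upperTriangular_mul, ← upperTriangular_I]
    simp [← mul_assoc, ← Complex.ofReal_mul, ← Real.exp_add, -Complex.ofReal_exp]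
  inv_val := by
    rw [upperTriangular_mul, ← upperTriangular_I]
    simp [← mul_assoc, ← Complex.ofReal_mul, ← Real.exp_add, -Complex.ofReal_exp]

/-- The shear `x + i y ↦ x + s y + i y`. -/
noncomputable def shear (s : ℝ) : (ℂ →L[ℝ] ℂ)ˣ where
  val := upperTriangular (s + Complex.I)
  inv := upperTriangular (-s + Complex.I)
  val_inv := by simp [upperTriangular_mul, upperTriangular_I]
  inv_val := by simp [upperTriangular_mul, upperTriangular_I]

/-- Multiplication by complex units, as a homomorphism into the group of invertible real-linear
endomorphisms of the plane. -/
noncomputable def unitMul : ℂˣ →* (ℂ →L[ℝ] ℂ)ˣ :=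
  Units.map
    { toFun := ContinuousLinearMap.mul ℝ ℂ
      map_one' := by ext; simp
      map_mul' := fun z w => by ext; simp [mul_assoc] }

lemma continuous_contraction : Continuous contraction := by
  have hval : Continuous fun t : ℝ => upperTriangular (Real.exp (-t) * Complex.I) :=
    continuous_upperTriangular.comp (by fun_prop)
  have hinv : Continuous fun t : ℝ => upperTriangular (Real.exp t * Complex.I) :=
    continuous_upperTriangular.comp (by fun_prop)
  exact Units.continuous_iff.mpr ⟨hval, hinv⟩

lemma continuous_shear : Continuous shear := by
  have hval : Continuous fun s : ℝ => upperTriangular (s + Complex.I) :=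
    continuous_upperTriangular.comp (by fun_prop)
  have hinv : Continuous fun s : ℝ => upperTriangular (-s + Complex.I) :=
    continuous_upperTriangular.comp (by fun_prop)
  exact Units.continuous_iff.mpr ⟨hval, hinv⟩

lemma shear_zero : shear 0 = 1 := Units.ext <| by simp [shear, upperTriangular_I]

lemma continuous_unitMul : Continuous unitMul :=
  Continuous.units_map _ (ContinuousLinearMap.mul ℝ ℂ).continuous

/-- The frame at `z` with parameter `t`: the real-linear map sending `1` to `z` and `i` to
`i e⁻ᵗ z`. -/
noncomputable def frame (z : ℂˣ) (t : ℝ) : (ℂ →L[ℝ] ℂ)ˣ := unitMul z * contraction t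

lemma continuous_frame (z : ℂˣ) : Continuous (frame z) :=
  continuous_const.mul continuous_contraction

lemma frame_mul (z u : ℂˣ) (t : ℝ) :
    frame (z * u) t = frame z t * ((contraction t)⁻¹ * unitMul u * contraction t) := by
  simp only [frame, map_mul, mul_assoc, mul_inv_cancel_left]

lemma map_eq_re_smul_add_im_smul (u : ℂ →L[ℝ] ℂ) (z w : ℂ) :
    u (z * w) = w.re • u z + w.im • u (z * Complex.I) := by
  rw [← map_smul, ← map_smul, ← map_add]
  congr 1
  nth_rw 1 [← Complex.re_add_im w]
  simp only [Complex.real_smul]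
  ring

lemma mul_frame_eq_frame_mul_shear {u : (ℂ →L[ℝ] ℂ)ˣ} {z w : ℂˣ}
    (hw : (w : ℂ) = u.val z) {q : ℂ} (hq : w * q = u.val (z * Complex.I)) (hq' : 0 < q.im) (t : ℝ) :
    u * frame z t = frame w (t - Real.log q.im) * shear (Real.exp (-t) * q.re) := by
  have hexp : Real.exp (-(t - Real.log q.im)) = Real.exp (-t) * q.im := by
    rw [neg_sub, sub_eq_neg_add, Real.exp_add, Real.exp_log hq']
  have hmul : (frame w (t - Real.log q.im) * shear (Real.exp (-t) * q.re)).val =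
      (unitMul w).val * upperTriangular (Real.exp (-t) * q) := by
    simp only [frame, Units.val_mul, mul_assoc, contraction, shear, upperTriangular_mul, hexp]
    congr 2
    apply Complex.ext <;> simp [-Complex.ofReal_exp]
  rw [Units.ext_iff, hmul]
  ext x
  have hlhs : (u * frame z t).val x =
      u.val (z * upperTriangular (Real.exp (-t) * Complex.I) x) := rfl
  have hrhs : ((unitMul w).val * upperTriangular (Real.exp (-t) * q)) x =
      w * upperTriangular (Real.exp (-t) * q) x := rfl
  rw [hlhs, hrhs, map_eq_re_smul_add_im_smul u.val z, ← hw, ← hq]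
  simp only [upperTriangular_apply, Complex.add_re, Complex.add_im, Complex.mul_re, Complex.mul_im,
    Complex.ofReal_re, Complex.ofReal_im, Complex.I_re, Complex.I_im, Complex.real_smul,
    Complex.ofReal_mul, mul_zero, zero_mul, mul_one, sub_self, add_zero, zero_add]
  ring

lemma det_eq_re_mul_im_sub (u : ℂ →L[ℝ] ℂ) :
    u.det = (u 1).re * (u Complex.I).im - (u Complex.I).re * (u 1).im := by
  rw [ContinuousLinearMap.det, ← LinearMap.det_toMatrix Complex.basisOneI, Matrix.det_fin_two]
  simp [LinearMap.toMatrix_apply]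

lemma im_map_mul_I_div_map (u : ℂ →L[ℝ] ℂ) (z : ℂ) :
    (u (z * Complex.I) / u z).im = u.det * ‖z‖ ^ 2 / ‖u z‖ ^ 2 := by
  have hz : u z = z.re • u 1 + z.im • u Complex.I := by
    simpa using map_eq_re_smul_add_im_smul u 1 z
  have hzI : u (z * Complex.I) = -z.im • u 1 + z.re • u Complex.I := by
    simpa using map_eq_re_smul_add_im_smul u 1 (z * Complex.I)
  rw [Complex.div_im, ← Complex.normSq_eq_norm_sq (u z), div_sub_div_same]
  congr 1
  simp only [hz, hzI, det_eq_re_mul_im_sub, ← Complex.normSq_eq_norm_sq, Complex.normSq_apply,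
    neg_smul, Complex.real_smul, Complex.add_re, Complex.add_im, Complex.neg_re, Complex.neg_im,
    Complex.mul_re, Complex.mul_im, Complex.ofReal_re, Complex.ofReal_im, zero_mul, add_zero,
    sub_zero]
  ring

lemma exists_mul_frame_eq_frame_mul_shear (u : (ℂ →L[ℝ] ℂ)ˣ) (hu : 0 < u.val.det) :
    ∃ B, ∀ z w : ℂˣ, (w : ℂ) = u.val z → ∃ c s : ℝ, |c| ≤ B ∧ |s| ≤ B ∧
      ∀ t, u * frame z t = frame w (t + c) * shear (Real.exp (-t) * s) := by
  obtain ⟨B, hB⟩ := exists_abs_log_norm_apply_sub_log_norm_le u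
  refine ⟨max (|Real.log u.val.det| + 2 * B) (‖u.val‖ * ‖(u⁻¹).val‖), fun z w hw => ?_⟩
  set q : ℂ := u.val (z * Complex.I) / u.val z with hq
  have him : q.im = u.val.det * ‖(z : ℂ)‖ ^ 2 / ‖(w : ℂ)‖ ^ 2 := by
    rw [hq, im_map_mul_I_div_map, hw]
  have hz := z.norm_pos
  have hw₀ := w.norm_pos
  refine ⟨-Real.log q.im, q.re, le_max_of_le_left ?_, le_max_of_le_right ?_, fun t => ?_⟩
  · have hlog : Real.log q.im =
        Real.log u.val.det - 2 * (Real.log ‖(w : ℂ)‖ - Real.log ‖(z : ℂ)‖) := by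
      rw [him, Real.log_div (by positivity) (by positivity), Real.log_mul hu.ne' (by positivity),
        Real.log_pow, Real.log_pow]
      push_cast
      ring
    have := hw ▸ hB z z.ne_zero
    grind
  · refine (Complex.abs_re_le_norm q).trans ?_
    rw [hq, norm_div, ← hw, div_le_iff₀ hw₀]
    calc ‖u.val (z * Complex.I)‖ ≤ ‖u.val‖ * ‖(z : ℂ)‖ := by
          simpa using u.val.le_opNorm (z * Complex.I)
      _ ≤ ‖u.val‖ * (‖(u⁻¹).val‖ * ‖(w : ℂ)‖) := by
          gcongr
          simpa only [hw, units_inv_apply_apply] using (u⁻¹).val.le_opNorm w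
      _ = _ := by ring
  · rw [← sub_eq_add_neg]
    refine mul_frame_eq_frame_mul_shear hw ?_ (him ▸ by positivity) t
    rw [hq, ← hw, mul_div_cancel₀ _ w.ne_zero]

end Frame

section FrameDensity

variable {G : Type*} [Group G] {ρ : G →* (ℂ →L[ℝ] ℂ)ˣ} {p : ℕ}
  (hρ : Summable fun h => ‖(ρ h).val‖⁻¹ ^ p)

lemma continuous_orbitDensity_frame (z : ℂˣ) :
    Continuous fun t => orbitDensity hρ (frame z t) :=
  (continuous_orbitDensity hρ).comp (continuous_frame z)

lemma continuous_orbitDensity_mul_frame (u : (ℂ →L[ℝ] ℂ)ˣ) (z : ℂˣ) :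
    Continuous fun t => orbitDensity hρ (u * frame z t) :=
  (continuous_orbitDensity hρ).comp (continuous_const.mul (continuous_frame z))

/-- The probability density attached to a point `z` of the punctured plane at scale `r`: the
average of the densities of the frames at `z` with parameter in `[r, 2r]`. -/
noncomputable def frameDensity (r : ℝ) (z : ℂˣ) : ℓ¹(G, ℝ) :=
  ⨍ t in r..2 * r, orbitDensity hρ (frame z t)

lemma frameDensity_mem_probDensities {r : ℝ} (hr : 0 < r) (z : ℂˣ) :
    frameDensity hρ r z ∈ probDensities G :=
  intervalAverage_mem_of_convex convex_probDensities isClosed_probDensities (by linarith)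
    (continuous_orbitDensity_frame hρ z) fun _ _ => orbitDensity_mem_probDensities hρ _

lemma eventually_norm_frameDensity_mul_sub_le {r : ℝ} (hr : 0 < r) {η : ℝ} (hη : 0 < η) :
    ∀ᶠ u : ℂˣ in 𝓝 1, ∀ z, ‖frameDensity hρ r (z * u) - frameDensity hρ r z‖ ≤ η := by
  have hcont : Continuous fun x : ℂˣ × ℝ =>
      (contraction x.2)⁻¹ * unitMul x.1 * contraction x.2 := by
    have := continuous_contraction
    have := continuous_unitMul
    fun_prop
  have hlim : ∀ᶠ u : ℂˣ in 𝓝 1, ∀ t ∈ Icc r (2 * r), ∀ M,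
      ‖orbitDensity hρ (M * ((contraction t)⁻¹ * unitMul u * contraction t)) -
        orbitDensity hρ M‖ ≤ η := by
    refine isCompact_Icc.eventually_forall_of_forall_eventually fun t _ => ?_
    have := hcont.tendsto (1, t)
    simp only [map_one, mul_one, inv_mul_cancel] at this
    exact this.eventually (eventually_norm_orbitDensity_mul_right_sub_le hρ hη)
  filter_upwards [hlim] with u hu z
  refine norm_intervalAverage_sub_le (by linarith) (continuous_orbitDensity_frame hρ _)
    (continuous_orbitDensity_frame hρ _) fun t ht => ?_
  rw [frame_mul]
  exact hu t ht _

lemma norm_intervalAverage_orbitDensity_add_sub_frameDensity_le {r : ℝ} (hr : 0 < r) (w : ℂˣ)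
    (c : ℝ) :
    ‖(⨍ t in r..2 * r, orbitDensity hρ (frame w (t + c))) - frameDensity hρ r w‖ ≤
      2 * |c| / r := by
  have hnorm : ∀ t, ‖orbitDensity hρ (frame w t)‖ ≤ 1 := fun t =>
    (norm_eq_one_of_mem_probDensities (orbitDensity_mem_probDensities hρ _)).le
  simpa only [mul_one, show 2 * r - r = r by ring, abs_of_pos hr] using!
    norm_intervalAverage_comp_add_right_sub_le (continuous_orbitDensity_frame hρ w) hnorm
      r (2 * r) c

lemma eventually_norm_frameDensity_sub_intervalAverage_le {g : G} (hg : 0 < (ρ g).val.det) {η : ℝ}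
    (hη : 0 < η) : ∀ᶠ r in atTop, ∀ z w : ℂˣ, (w : ℂ) = (ρ g).val z →
      ‖frameDensity hρ r w - ⨍ t in r..2 * r, orbitDensity hρ (ρ g * frame z t)‖ ≤ η := by
  obtain ⟨B, hB⟩ := exists_mul_frame_eq_frame_mul_shear (ρ g) hg
  have hshear : ∀ᶠ x : ℝ in 𝓝 0, ∀ M,
      ‖orbitDensity hρ (M * shear x) - orbitDensity hρ M‖ ≤ η / 2 :=
    (shear_zero ▸ continuous_shear.tendsto 0).eventually
      (eventually_norm_orbitDensity_mul_right_sub_le hρ (half_pos hη))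
  obtain ⟨ε, hε, hball⟩ := Metric.eventually_nhds_iff.mp hshear
  have hexp : Tendsto (fun r => Real.exp (-r) * B) atTop (𝓝 0) := by
    simpa using Real.tendsto_exp_neg_atTop_nhds_zero.mul_const B
  have hshift : Tendsto (fun r : ℝ => 2 * B / r) atTop (𝓝 0) :=
    tendsto_const_nhds.div_atTop tendsto_id
  filter_upwards [hexp.eventually_lt_const hε, hshift.eventually_le_const (half_pos hη),
    eventually_gt_atTop 0] with r hrε hrη hr z w hw
  obtain ⟨c, s, hc, hs, hcs⟩ := hB z w hw
  have hclose : ‖(⨍ t in r..2 * r, orbitDensity hρ (frame w (t + c))) -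
      ⨍ t in r..2 * r, orbitDensity hρ (ρ g * frame z t)‖ ≤ η / 2 := by
    refine norm_intervalAverage_sub_le (by linarith)
      ((continuous_orbitDensity_frame hρ w).comp (continuous_add_const c))
      (continuous_orbitDensity_mul_frame hρ (ρ g) z) fun t ht => ?_
    rw [hcs, norm_sub_rev]
    refine hball ?_ _
    rw [dist_zero_right, norm_mul, Real.norm_eq_abs, Real.norm_eq_abs, Real.abs_exp]
    refine lt_of_le_of_lt ?_ hrε
    gcongr
    exact ht.1
  have hdrift : ‖(⨍ t in r..2 * r, orbitDensity hρ (frame w (t + c))) - frameDensity hρ r w‖ ≤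
      η / 2 :=
    (norm_intervalAverage_orbitDensity_add_sub_frameDensity_le hρ hr w c).trans
      (le_trans (by gcongr) hrη)
  rw [norm_sub_rev] at hdrift
  linarith [norm_sub_le_norm_sub_add_norm_sub (frameDensity hρ r w)
    (⨍ t in r..2 * r, orbitDensity hρ (frame w (t + c)))
    (⨍ t in r..2 * r, orbitDensity hρ (ρ g * frame z t))]

lemma eventually_tsum_abs_frameDensity_sub_le {g : G} (hg : 0 < (ρ g).val.det) {η : ℝ}
    (hη : 0 < η) : ∀ᶠ r in atTop, ∀ z w : ℂˣ, (w : ℂ) = (ρ g).val z →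
      ∑' h, |frameDensity hρ r w h - frameDensity hρ r z (g⁻¹ * h)| ≤ η := by
  filter_upwards [eventually_norm_frameDensity_sub_intervalAverage_le hρ hg hη] with r hr z w hw
  have happly : ∀ h, (⨍ t in r..2 * r, orbitDensity hρ (ρ g * frame z t)) h =
      frameDensity hρ r z (g⁻¹ * h) := fun h => by
    rw [frameDensity, intervalAverage_apply (continuous_orbitDensity_frame hρ z),
      intervalAverage_apply (continuous_orbitDensity_mul_frame hρ (ρ g) z)]
    simp only [orbitDensity_mul_left]
  simpa only [norm_eq_tsum_abs, lp.coeFn_sub, Pi.sub_apply, happly] using hr z w hw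

end FrameDensity

section IntegralMatrices

lemma summable_inv_norm_pow_of_mem_lattice {V α : Type*} [NormedAddCommGroup V] [NormedSpace ℝ V]
    [FiniteDimensional ℝ V] (L : Submodule ℤ V) [DiscreteTopology L] {f : α → V}
    (hf : Function.Injective f) (hmem : ∀ x, f x ∈ L) {p : ℕ} (hp : Module.finrank ℤ L < p) :
    Summable fun x => ‖f x‖⁻¹ ^ p := by
  have hsum : Summable fun z : L => ‖(z : V)‖⁻¹ ^ p := ZLattice.summable_norm_pow_inv L p hp
  exact hsum.comp_injective (i := codRestrict f L hmem) (hf.codRestrict hmem)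

lemma summable_inv_norm_pow_of_repr_mem_range {ι V α : Type*} [Fintype ι] [NormedAddCommGroup V]
    [NormedSpace ℝ V] (b : Module.Basis ι ℝ V) {f : α → V} (hf : Function.Injective f)
    (hint : ∀ x i, b.repr (f x) i ∈ range ((↑) : ℤ → ℝ)) {p : ℕ} (hp : Fintype.card ι < p) :
    Summable fun x => ‖f x‖⁻¹ ^ p := by
  have : FiniteDimensional ℝ V := b.finiteDimensional_of_finite
  refine summable_inv_norm_pow_of_mem_lattice (Submodule.span ℤ (range b)) hf
    (fun x => (b.mem_span_iff_repr_mem ℤ (f x)).mpr fun i => by simpa using hint x i) ?_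
  rwa [ZLattice.rank ℝ, Module.finrank_eq_card_basis b]
variable {n E : Type*} [Fintype n] [DecidableEq n] [NormedAddCommGroup E] [NormedSpace ℝ E]
  [FiniteDimensional ℝ E] (b : Module.Basis n ℝ E)

/-- Real matrices as continuous endomorphisms of `E`, in the basis `b`. -/
noncomputable def matrixAlgEquiv : Matrix n n ℝ ≃ₐ[ℝ] (E →L[ℝ] E) :=
  (Matrix.toLinAlgEquiv b).trans (Module.End.toContinuousLinearMap E)

/-- The linear action on `E` of the integral matrices of determinant one, in the basis `b`. -/
noncomputable def integralAction : Matrix.SpecialLinearGroup n ℤ →* (E →L[ℝ] E)ˣ :=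
  (Units.map (matrixAlgEquiv b : Matrix n n ℝ →* (E →L[ℝ] E))).comp
    (Matrix.SpecialLinearGroup.mapGL ℝ)

lemma val_integralAction (h : Matrix.SpecialLinearGroup n ℤ) :
    (integralAction b h).val = matrixAlgEquiv b (h.val.map Int.cast) := rfl

lemma det_integralAction (h : Matrix.SpecialLinearGroup n ℤ) :
    (integralAction b h).val.det = 1 := by
  have hdet : (integralAction b h).val.det =
      LinearMap.det (Matrix.toLin b b (h.val.map (Int.castRingHom ℝ))) := rfl
  rw [hdet, LinearMap.det_toLin]
  exact (h.map (Int.castRingHom ℝ)).det_coe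

lemma injective_val_integralAction :
    Function.Injective fun h => (integralAction b h).val :=
  Units.val_injective.comp <| (Units.map_injective (matrixAlgEquiv b).injective).comp
    Matrix.SpecialLinearGroup.mapGL_injective

lemma summable_integralAction {p : ℕ} (hp : Fintype.card n ^ 2 < p) :
    Summable fun h => ‖(integralAction b h).val‖⁻¹ ^ p := by
  refine summable_inv_norm_pow_of_repr_mem_range
    ((Matrix.stdBasis ℝ n n).map (matrixAlgEquiv b).toLinearEquiv) (injective_val_integralAction b)
    (fun h ij => ⟨h.val ij.1 ij.2, ?_⟩) (by simpa [sq] using hp)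
  simp [val_integralAction, Matrix.stdBasis]

end IntegralMatrices

section GaussianLattice

/-- The embedding of `ℤ²` into the plane as the Gaussian integers. -/
noncomputable def toComplex : (Fin 2 → ℤ) →+ ℂ where
  toFun y := ⟨y 0, y 1⟩
  map_zero' := by simp [Complex.ext_iff]
  map_add' y a := by simp [Complex.ext_iff]

lemma toComplex_injective : Function.Injective toComplex := by
  intro x y h
  ext i
  fin_cases i <;> simp_all [toComplex, Complex.ext_iff]

lemma toComplex_ne_zero {y : Fin 2 → ℤ} (hy : y ≠ 0) : toComplex y ≠ 0 :=
  (map_ne_zero_iff toComplex toComplex_injective).mpr hy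

lemma toComplex_mulVec (g : Matrix.SpecialLinearGroup (Fin 2) ℤ) (y : Fin 2 → ℤ) :
    toComplex (g.val.mulVec y) = (integralAction Complex.basisOneI g).val (toComplex y) := by
  have htoLin : (integralAction Complex.basisOneI g).val (toComplex y) =
      Matrix.toLin Complex.basisOneI Complex.basisOneI (g.val.map Int.cast) (toComplex y) := rfl
  rw [htoLin, Matrix.toLin_apply]
  apply Complex.ext <;> simp [toComplex, Matrix.mulVec, dotProduct, Fin.sum_univ_two]

lemma tendsto_norm_toComplex : Tendsto (fun y => ‖toComplex y‖) cofinite atTop := by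
  rw [← cocompact_eq_cofinite]
  refine tendsto_atTop_mono (f := fun y => ‖y‖) (fun y => ?_) tendsto_norm_cocompact_atTop
  refine (pi_norm_le_iff_of_nonneg (norm_nonneg _)).mpr fun i => ?_
  fin_cases i
  · simpa only [Int.norm_eq_abs] using! Complex.abs_re_le_norm (toComplex y)
  · simpa only [Int.norm_eq_abs] using! Complex.abs_im_le_norm (toComplex y)

/-- A nonzero lattice point as a unit of `ℂ`, with the junk value `1` at the origin. -/
noncomputable def latticeUnit (y : Fin 2 → ℤ) : ℂˣ :=
  if hy : y = 0 then 1 else Units.mk0 (toComplex y) (toComplex_ne_zero hy)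

lemma coe_latticeUnit {y : Fin 2 → ℤ} (hy : y ≠ 0) : (latticeUnit y : ℂ) = toComplex y := by
  simp [latticeUnit, hy]

lemma tendsto_latticeUnit_inv_mul_latticeUnit_add (a : Fin 2 → ℤ) :
    Tendsto (fun y => (latticeUnit y)⁻¹ * latticeUnit (y + a)) cofinite (𝓝 1) := by
  have hlim : Tendsto (fun y => 1 + (toComplex y)⁻¹ * toComplex a) cofinite (𝓝 1) := by
    have := tendsto_inv₀_cobounded.comp (tendsto_norm_atTop_iff_cobounded.mp tendsto_norm_toComplex)
    simpa [Function.comp_def] using (this.mul_const (toComplex a)).const_add 1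
  rw [Units.isEmbedding_val₀.tendsto_nhds_iff]
  refine hlim.congr' ?_
  filter_upwards [eventually_cofinite_ne 0, eventually_cofinite_ne (-a)] with y hy hya
  simp [coe_latticeUnit hy, coe_latticeUnit (mt eq_neg_of_add_eq_zero_left hya), mul_add,
    toComplex_ne_zero hy]

lemma coe_latticeUnit_mulVec (g : Matrix.SpecialLinearGroup (Fin 2) ℤ) {y : Fin 2 → ℤ}
    (hy : y ≠ 0) : (latticeUnit (g.val.mulVec y) : ℂ) =
      (integralAction Complex.basisOneI g).val (latticeUnit y) := by
  have hgy : g.val.mulVec y ≠ 0 := fun h => hy <|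
    Matrix.eq_zero_of_mulVec_eq_zero (by simp [g.det_coe]) h
  rw [coe_latticeUnit hgy, coe_latticeUnit hy, toComplex_mulVec]

end GaussianLattice

section LatticeDensity

lemma summable_integralAction_basisOneI :
    Summable fun h => ‖(integralAction Complex.basisOneI h).val‖⁻¹ ^ 5 :=
  summable_integralAction Complex.basisOneI (by simp)

/-- The probability density on `SL(2, ℤ)` attached to a lattice point `y` at scale `r`. -/
noncomputable def latticeDensity (r : ℝ) (y : Fin 2 → ℤ) :
    ℓ¹(Matrix.SpecialLinearGroup (Fin 2) ℤ, ℝ) :=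
  frameDensity summable_integralAction_basisOneI r (latticeUnit y)

lemma latticeDensity_mem_probDensities {r : ℝ} (hr : 0 < r) (y : Fin 2 → ℤ) :
    latticeDensity r y ∈ probDensities (Matrix.SpecialLinearGroup (Fin 2) ℤ) :=
  frameDensity_mem_probDensities _ hr _

lemma tendsto_norm_latticeDensity_add_sub {r : ℝ} (hr : 0 < r) (a : Fin 2 → ℤ) :
    Tendsto (fun y => ‖latticeDensity r (y + a) - latticeDensity r y‖) cofinite (𝓝 0) := by
  rw [tendsto_order]
  refine ⟨fun ε hε => .of_forall fun y => hε.trans_le (norm_nonneg _), fun ε hε => ?_⟩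
  filter_upwards [(tendsto_latticeUnit_inv_mul_latticeUnit_add a).eventually
    (eventually_norm_frameDensity_mul_sub_le summable_integralAction_basisOneI hr
      (half_pos hε))] with y hy
  have hle := hy (latticeUnit y)
  rw [mul_inv_cancel_left] at hle
  exact hle.trans_lt (half_lt_self hε)

lemma tendsto_limsup_tsum_abs_latticeDensity_mulVec_sub
    (g : Matrix.SpecialLinearGroup (Fin 2) ℤ) :
    Tendsto (fun r => limsup (fun y => ∑' h,
      |latticeDensity r (g.val.mulVec y) h - latticeDensity r y (g⁻¹ * h)|) cofinite)
      atTop (𝓝 0) := by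
  refine tendsto_limsup_nhds_zero (fun r y => tsum_nonneg fun h => abs_nonneg _) fun η hη => ?_
  have hdet : 0 < (integralAction Complex.basisOneI g).val.det := by
    rw [det_integralAction]
    exact one_pos
  filter_upwards [eventually_tsum_abs_frameDensity_sub_le
    summable_integralAction_basisOneI hdet hη] with r hr
  filter_upwards [eventually_cofinite_ne 0] with y hy
  exact hr _ _ (coe_latticeUnit_mulVec g hy)

end LatticeDensity

/-- The function-level formulation of topological amenability of the
`SL(2,ℤ)`-action on the Higson corona of `ℤ²`: there is a sequence of maps
`ζ_n : ℤ² → P(SL(2,ℤ))` into probability densities with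
(i) `‖ζ_n(y + a) − ζ_n(y)‖₁ → 0` along the cofinite filter for every `a`, and
(ii) for every `g`, `limsup_{y → ∞} ‖ζ_n(g·y) − g·ζ_n(y)‖₁ → 0` as `n → ∞`. -/
theorem stmt_4 :
    ∃ ζ : ℕ → (Fin 2 → ℤ) → (Matrix.SpecialLinearGroup (Fin 2) ℤ → ℝ),
      -- each ζ_n y is a probability density on SL(2,ℤ)
      (∀ n y, (∀ h, 0 ≤ ζ n y h) ∧ Summable (ζ n y) ∧ ∑' h, ζ n y h = 1) ∧
      -- (i) asymptotic invariance under translations of ℤ²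
      (∀ n, ∀ a : Fin 2 → ℤ,
        Filter.Tendsto (fun y => ∑' h, |ζ n (y + a) h - ζ n y h|)
          Filter.cofinite (nhds 0)) ∧
      -- (ii) asymptotic equivariance in the limsup sense
      (∀ g : Matrix.SpecialLinearGroup (Fin 2) ℤ,
        Filter.Tendsto (fun n =>
            Filter.limsup
              (fun y => ∑' h,
                |ζ n ((g : Matrix (Fin 2) (Fin 2) ℤ).mulVec y) h - ζ n y (g⁻¹ * h)|)
              Filter.cofinite)
          Filter.atTop (nhds 0)) := by
  have hpos : ∀ n : ℕ, (0 : ℝ) < n + 1 := fun n => by positivity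
  refine ⟨fun n y => latticeDensity (n + 1) y, fun n y => ?_, fun n a => ?_, fun g => ?_⟩
  · obtain ⟨hnonneg, hsum⟩ := latticeDensity_mem_probDensities (hpos n) y
    exact ⟨hnonneg, summable_coeFn _, hsum⟩
  · simpa only [norm_eq_tsum_abs] using! tendsto_norm_latticeDensity_add_sub (hpos n) a
  · exact (tendsto_limsup_tsum_abs_latticeDensity_mulVec_sub g).comp
      (tendsto_atTop_add_const_right _ 1 tendsto_natCast_atTop_atTop)
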